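/- The operator T : ℂ → ℂ given by T(x) = 2x is diskcyclic on ℂ (with diskcyclic vector 1), while its inverse T⁻¹(x) = x/2 is not diskcyclic. Consequently, a diskcyclic operator exists on a nontrivial complex Hilbert space H if and only if dim H = 1 or dim H = ∞. -/

import Mathlib

open Filter Topology Pointwise

/-- The disk orbit of `x` under `T`: `{α • Tⁿ x : n ≥ 0, α ∈ ℂ, |α| ≤ 1}`. -/
def diskOrbit {H : Type*} [NormedAddCommGroup H] [NormedSpace ℂ H]
    (T : H →L[ℂ] H) (x : H) : Set H :=
  {y | ∃ (n : ℕ) (α : ℂ), ‖α‖ ≤ 1 ∧ y = α • (T ^ n) x}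

/-- An operator is diskcyclic if some vector has dense disk orbit. -/
def DiskCyclic {H : Type*} [NormedAddCommGroup H] [NormedSpace ℂ H]
    (T : H →L[ℂ] H) : Prop :=
  ∃ x : H, Dense (diskOrbit T x)

/-!
In dimension one, `αaⁿ` with `|α| ≤ 1` and `|a| > 1` fills the disks of radius `|a|ⁿ`, whereas the
disk orbits of a contraction are bounded.

If `1 < dim H < ∞`, triangularizing the transpose of `T` yields independent functionals `f`, `g`
with `f ∘ T = a f` and `g ∘ T = b g + c f`. The quotient `g / f` does not see scalars, so a
supercyclic vector `x` would make the sequence `g (Tⁿ x) / f (Tⁿ x)` dense in `ℂ`. But this sequence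
is an orbit of the affine map `r ↦ (b r + c) / a`, hence conjugate to a geometric or an arithmetic
progression, and these are never dense.

If `H` is infinite-dimensional and separable, it has an orthonormal basis indexed by `ℕ`, and
Rolewicz's operator, the backward shift times a scalar of modulus `> 1`, has a dense orbit: its
powers eventually vanish at each finite combination of basis vectors, and it has a right inverse of
norm less than one.
-/

section Dynamics

variable {𝕜 E : Type*} [Semiring 𝕜] [AddCommMonoid E] [Module 𝕜 E] [TopologicalSpace E]

/-- An operator is supercyclic if the scalar multiples of some orbit are dense. No bound is put on
the scalars, so this is weaker than being diskcyclic; the finite-dimensional obstruction already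
applies to it. -/
def Supercyclic (T : E →L[𝕜] E) : Prop :=
  ∃ x : E, Dense {y | ∃ (n : ℕ) (α : 𝕜), y = α • (T ^ n) x}

/-- An operator is hypercyclic if it has a dense orbit. This is stronger than being diskcyclic, and
is what the infinite-dimensional examples satisfy. -/
def Hypercyclic (T : E →L[𝕜] E) : Prop :=
  ∃ x : E, DenseRange fun n : ℕ ↦ (T ^ n) x

end Dynamics

section DiskCyclic

variable {E : Type*} [NormedAddCommGroup E] [NormedSpace ℂ E] {T : E →L[ℂ] E}

theorem Hypercyclic.diskCyclic (h : Hypercyclic T) : DiskCyclic T := by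
  obtain ⟨x, hx⟩ := h
  refine ⟨x, hx.mono ?_⟩
  rintro _ ⟨n, rfl⟩
  exact ⟨n, 1, norm_one.le, (one_smul ℂ _).symm⟩

theorem DiskCyclic.supercyclic (h : DiskCyclic T) : Supercyclic T := by
  obtain ⟨x, hx⟩ := h
  refine ⟨x, hx.mono ?_⟩
  rintro y ⟨n, α, -, hy⟩
  exact ⟨n, α, hy⟩

theorem not_diskCyclic_of_norm_le_one [Nontrivial E] (hT : ‖T‖ ≤ 1) : ¬ DiskCyclic T := by
  rintro ⟨x, hx⟩
  have hbounded : diskOrbit T x ⊆ Metric.closedBall 0 ‖x‖ := by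
    rintro _ ⟨n, α, hα, rfl⟩
    have hTn : ‖T ^ n‖ ≤ 1 := (norm_pow_le T n).trans (pow_le_one₀ (norm_nonneg T) hT)
    rw [mem_closedBall_zero_iff, norm_smul]
    calc ‖α‖ * ‖(T ^ n) x‖ ≤ 1 * (1 * ‖x‖) := by
          gcongr
          exact (T ^ n).le_of_opNorm_le hTn x
      _ = ‖x‖ := by rw [one_mul, one_mul]
  obtain ⟨y, hy⟩ := NormedSpace.exists_lt_norm ℂ E ‖x‖
  have hyx : ‖y‖ ≤ ‖x‖ :=
    mem_closedBall_zero_iff.1 (closure_minimal hbounded Metric.isClosed_closedBall (hx y))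
  exact hyx.not_gt hy

theorem dense_diskOrbit_smul_id {a : ℂ} (ha : 1 < ‖a‖) {x : E} (hx : ∀ y, ∃ c : ℂ, c • x = y) :
    Dense (diskOrbit (a • ContinuousLinearMap.id ℂ E) x) := by
  have hpow (n : ℕ) : ((a • ContinuousLinearMap.id ℂ E) ^ n) x = a ^ n • x := by
    simp [← ContinuousLinearMap.one_def, smul_pow]
  have ha₀ : a ≠ 0 := norm_pos_iff.1 (one_pos.trans ha)
  intro y
  obtain ⟨c, rfl⟩ := hx y
  obtain ⟨n, hn⟩ := pow_unbounded_of_one_lt ‖c‖ ha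
  refine subset_closure ⟨n, c / a ^ n, ?_, ?_⟩
  · rw [norm_div, norm_pow]
    exact div_le_one_of_le₀ hn.le (by positivity)
  · rw [hpow, smul_smul, div_mul_cancel₀ c (pow_ne_zero n ha₀)]

end DiskCyclic

theorem not_denseRange_natCast (𝕜 : Type*) [RCLike 𝕜] : ¬ DenseRange ((↑) : ℕ → 𝕜) := by
  intro hd
  have hre : 0 ≤ RCLike.re (-1 : 𝕜) := hd.induction_on (p := fun z ↦ 0 ≤ RCLike.re z) _
    (isClosed_le continuous_const RCLike.continuous_re) fun n ↦ by simp
  norm_num at hre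

theorem not_denseRange_pow_mul {𝕜 : Type*} [NontriviallyNormedField 𝕜] (l s : 𝕜) :
    ¬ DenseRange fun n : ℕ ↦ l ^ n * s := by
  intro hd
  have hbounded (n : ℕ) : ‖l ^ n * s‖ ≤ ‖s‖ := by
    rw [norm_mul, norm_pow]
    rcases le_total ‖l‖ 1 with hl | hl
    · exact mul_le_of_le_one_left (norm_nonneg s) (pow_le_one₀ (norm_nonneg l) hl)
    · have hs : ‖s‖ ≤ ‖(0 : 𝕜)‖ := hd.induction_on (p := fun z ↦ ‖s‖ ≤ ‖z‖) _
        (isClosed_le continuous_const continuous_norm) fun n ↦ by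
          rw [norm_mul, norm_pow]
          exact le_mul_of_one_le_left (norm_nonneg s) (one_le_pow₀ hl)
      rw [norm_le_zero_iff.1 (hs.trans_eq norm_zero), norm_zero, mul_zero]
  obtain ⟨y, hy⟩ := NormedField.exists_lt_norm 𝕜 ‖s‖
  have hys : ‖y‖ ≤ ‖s‖ := hd.induction_on (p := fun z ↦ ‖z‖ ≤ ‖s‖) y
    (isClosed_le continuous_norm continuous_const) hbounded
  exact hys.not_gt hy

theorem not_denseRange_of_affine_recurrence {𝕜 : Type*} [RCLike 𝕜] {r : ℕ → 𝕜} {l m : 𝕜}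
    (h : ∀ n, r (n + 1) = l * r n + m) : ¬ DenseRange r := by
  intro hd
  by_cases hfix : ∃ p, l * p + m = p
  · obtain ⟨p, hp⟩ := hfix
    have hr (n : ℕ) : r n - p = l ^ n * (r 0 - p) := by
      induction n with
      | zero => rw [pow_zero, one_mul]
      | succ n ih =>
        rw [h, pow_succ]
        linear_combination l * ih + hp
    refine not_denseRange_pow_mul l (r 0 - p) ?_
    rw [← funext hr]
    exact (Equiv.subRight p).surjective.denseRange.comp hd (continuous_sub_right p)
  · push Not at hfix
    have hl : l = 1 := by
      by_contra hl
      have hl' : 1 - l ≠ 0 := sub_ne_zero.2 (Ne.symm hl)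
      exact hfix (m / (1 - l)) (by field_simp; ring)
    have hm : m ≠ 0 := fun hm ↦ hfix 0 (by rw [hm, mul_zero, zero_add])
    have hr (n : ℕ) : (r n - r 0) / m = n := by
      rw [div_eq_iff hm]
      induction n with
      | zero => simp
      | succ n ih =>
        rw [h, hl]
        push_cast
        linear_combination ih
    have hsurj : Function.Surjective fun z : 𝕜 ↦ (z - r 0) / m := fun z ↦
      ⟨z * m + r 0, by field_simp; ring⟩
    refine not_denseRange_natCast 𝕜 ?_
    simpa only [Function.comp_def, hr] using hsurj.denseRange.comp hd (by fun_prop)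

theorem exists_apply_eq_one_and_apply_eq {K V : Type*} [Field K] [AddCommGroup V] [Module K V]
    {f g : Module.Dual K V} (hfg : LinearIndependent K ![f, g]) (r : K) :
    ∃ z, f z = 1 ∧ g z = r := by
  have hf : f ≠ 0 := hfg.ne_zero 0
  obtain ⟨w, hw⟩ := LinearMap.surjective hf 1
  obtain ⟨e, hfe, hge⟩ : ∃ e, f e = 0 ∧ g e ≠ 0 := by
    by_contra! hker
    have hspan : g ∈ Submodule.span K (Set.range fun _ : Unit ↦ f) :=
      mem_span_of_iInf_ker_le_ker (by simpa [SetLike.le_def] using hker)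
    rw [Set.range_const, Submodule.mem_span_singleton] at hspan
    obtain ⟨c, hc⟩ := hspan
    exact (LinearIndependent.pair_iff' hf).1 hfg c hc
  refine ⟨w + ((r - g w) / g e) • e, ?_, ?_⟩
  · rw [map_add, map_smul, hfe, smul_zero, add_zero, hw]
  · rw [map_add, map_smul, smul_eq_mul, div_mul_cancel₀ _ hge, add_sub_cancel]

theorem exists_linearIndependent_pair_triangular {K V : Type*} [Field K] [IsAlgClosed K]
    [AddCommGroup V] [Module K V] (hV : 1 < Module.finrank K V) (A : Module.End K V) :
    ∃ (u v : V) (a b c : K), LinearIndependent K ![u, v] ∧ A u = a • u ∧ A v = b • v + c • u := by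
  have : FiniteDimensional K V := Module.finite_of_finrank_pos (by omega)
  have : Nontrivial V := Module.nontrivial_of_finrank_pos (by omega : 0 < Module.finrank K V)
  obtain ⟨a, ha⟩ := Module.End.exists_eigenvalue A
  obtain ⟨u, hu⟩ := ha.exists_hasEigenvector
  let p : Submodule K V := K ∙ u
  have hp : p ≤ p.comap A := by
    rw [Submodule.span_singleton_le_iff_mem, Submodule.mem_comap, hu.apply_eq_smul]
    exact p.smul_mem a (Submodule.mem_span_singleton_self u)
  have : Nontrivial (V ⧸ p) := by
    refine Submodule.Quotient.nontrivial_iff.2 fun htop ↦ hV.ne' ?_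
    rw [← finrank_top, ← htop, finrank_span_singleton hu.2]
  obtain ⟨b, hb⟩ := Module.End.exists_eigenvalue (p.mapQ p A hp)
  obtain ⟨w, hw⟩ := hb.exists_hasEigenvector
  obtain ⟨v, rfl⟩ := p.mkQ_surjective w
  have hv : v ∉ p := fun hv ↦ hw.2 ((Submodule.Quotient.mk_eq_zero p).2 hv)
  have hAv : A v - b • v ∈ p := (Submodule.Quotient.eq p).1 hw.apply_eq_smul
  obtain ⟨c, hc⟩ := Submodule.mem_span_singleton.1 hAv
  refine ⟨u, v, a, b, c, ?_, hu.apply_eq_smul, by rw [hc, add_sub_cancel]⟩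
  exact (LinearIndependent.pair_iff' hu.2).2 fun d hd ↦ hv (Submodule.mem_span_singleton.2 ⟨d, hd⟩)

theorem denseRange_div_of_dense_smul {𝕜 E ι : Type*} [NormedField 𝕜] [AddCommGroup E] [Module 𝕜 E]
    [TopologicalSpace E] {f g : Module.Dual 𝕜 E} (hfc : Continuous f) (hgc : Continuous g)
    (hfg : LinearIndependent 𝕜 ![f, g]) {u : ι → E}
    (hu : Dense {y | ∃ (i : ι) (α : 𝕜), y = α • u i}) : DenseRange fun i ↦ g (u i) / f (u i) := by
  intro r
  obtain ⟨z, hfz, hgz⟩ := exists_apply_eq_one_and_apply_eq hfg r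
  have hz : f z ≠ 0 := hfz ▸ one_ne_zero
  have hclosure : z ∈ closure ({y | f y ≠ 0} ∩ {y | ∃ (i : ι) (α : 𝕜), y = α • u i}) :=
    hu.open_subset_closure_inter (isOpen_ne_fun hfc continuous_const) hz
  have hcont : ContinuousAt (fun y ↦ g y / f y) z :=
    hgc.continuousAt.div hfc.continuousAt hz
  have hr : r = g z / f z := by rw [hfz, hgz, div_one]
  rw [hr]
  refine closure_mono ?_ (mem_closure_image (f := fun y ↦ g y / f y) hcont hclosure)
  rintro _ ⟨_, ⟨hne, i, α, rfl⟩, rfl⟩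
  have hα : α ≠ 0 := by
    rintro rfl
    simp at hne
  exact ⟨i, by simp [mul_div_mul_left _ _ hα]⟩

theorem not_supercyclic_of_triangular_pair {𝕜 E : Type*} [RCLike 𝕜] [AddCommGroup E]
    [Module 𝕜 E] [TopologicalSpace E] {f g : Module.Dual 𝕜 E} (hfc : Continuous f)
    (hgc : Continuous g) (hfg : LinearIndependent 𝕜 ![f, g]) {T : E →L[𝕜] E}
    {a b c : 𝕜} (hf : ∀ x, f (T x) = a * f x) (hg : ∀ x, g (T x) = b * g x + c * f x) :
    ¬ Supercyclic T := by
  rintro ⟨x, hx⟩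
  have hratio : DenseRange fun n : ℕ ↦ g ((T ^ n) x) / f ((T ^ n) x) :=
    denseRange_div_of_dense_smul hfc hgc hfg hx
  have hsucc (n : ℕ) : (T ^ (n + 1)) x = T ((T ^ n) x) := by rw [pow_succ', mul_apply_eq_comp]
  have hfn (n : ℕ) : f ((T ^ n) x) = a ^ n * f x := by
    induction n with
    | zero => simp
    | succ n ih => rw [hsucc, hf, ih, pow_succ', mul_assoc]
  by_cases h₀ : a * f x = 0
  · refine not_denseRange_of_affine_recurrence (l := 0) (m := 0) (fun n ↦ ?_) hratio
    have hzero : f ((T ^ (n + 1)) x) = 0 := by rw [hfn, pow_succ, mul_assoc, h₀, mul_zero]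
    rw [hzero, div_zero, zero_mul, zero_add]
  · obtain ⟨ha, hfx⟩ := mul_ne_zero_iff.1 h₀
    refine not_denseRange_of_affine_recurrence (l := b / a) (m := c / a) (fun n ↦ ?_) hratio
    have hne : f ((T ^ n) x) ≠ 0 := hfn n ▸ mul_ne_zero (pow_ne_zero n ha) hfx
    simp only [hsucc, hf, hg]
    field_simp

theorem not_supercyclic_of_one_lt_finrank {E : Type*} [AddCommGroup E] [Module ℂ E]
    [TopologicalSpace E] [IsTopologicalAddGroup E] [ContinuousSMul ℂ E] [T2Space E]
    (hE : 1 < Module.finrank ℂ E) (T : E →L[ℂ] E) : ¬ Supercyclic T := by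
  have : FiniteDimensional ℂ E := Module.finite_of_finrank_pos (by omega)
  obtain ⟨f, g, a, b, c, hfg, hf, hg⟩ := exists_linearIndependent_pair_triangular
    (hE.trans_eq Subspace.dual_finrank_eq.symm) (T : E →ₗ[ℂ] E).dualMap
  exact not_supercyclic_of_triangular_pair f.continuous_of_finiteDimensional
    g.continuous_of_finiteDimensional hfg (LinearMap.congr_fun hf) (LinearMap.congr_fun hg)

theorem exists_denseRange_of_forall_nonempty_inter {ι X Y : Type*} [TopologicalSpace X]
    [BaireSpace X] [Nonempty X] [TopologicalSpace Y] [SecondCountableTopology Y] {f : ι → X → Y}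
    (hf : ∀ i, Continuous (f i))
    (h : ∀ U V, IsOpen U → U.Nonempty → IsOpen V → V.Nonempty → ∃ i, (U ∩ f i ⁻¹' V).Nonempty) :
    ∃ x, DenseRange fun i ↦ f i x := by
  let B := TopologicalSpace.countableBasis Y
  have hB : TopologicalSpace.IsTopologicalBasis B := TopologicalSpace.isBasis_countableBasis Y
  have hdense : Dense (⋂ V ∈ B, ⋃ i, f i ⁻¹' V) := by
    refine dense_biInter_of_isOpen
      (fun V hV ↦ isOpen_iUnion fun i ↦ (hB.isOpen hV).preimage (hf i))
      (TopologicalSpace.countable_countableBasis Y)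
      fun V hV ↦ dense_iff_inter_open.2 fun U hU hUne ↦ ?_
    obtain ⟨i, x, hxU, hxV⟩ :=
      h U V hU hUne (hB.isOpen hV) (TopologicalSpace.nonempty_of_mem_countableBasis hV)
    exact ⟨x, hxU, Set.mem_iUnion.2 ⟨i, hxV⟩⟩
  obtain ⟨x, hx⟩ := hdense.nonempty
  refine ⟨x, hB.dense_iff.2 fun V hV _ ↦ ?_⟩
  obtain ⟨i, hi⟩ := Set.mem_iUnion.1 (Set.mem_iInter₂.1 hx V hV)
  exact ⟨f i x, hi, i, rfl⟩

/- Kitai's hypercyclicity criterion: for large `n` the vector `y + Rⁿ z` is close to `y`, and `Tⁿ`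
sends it to `Tⁿ y + z`, close to `z`. -/
theorem hypercyclic_of_dense_tendsto_zero {𝕜 E : Type*} [Semiring 𝕜] [AddCommMonoid E] [Module 𝕜 E]
    [TopologicalSpace E] [ContinuousAdd E] [BaireSpace E] [SecondCountableTopology E]
    {T R : E →L[𝕜] E} (hTR : T * R = 1) (hT : Dense {y | Tendsto (fun n ↦ (T ^ n) y) atTop (𝓝 0)})
    (hR : Dense {z | Tendsto (fun n ↦ (R ^ n) z) atTop (𝓝 0)}) : Hypercyclic T := by
  refine exists_denseRange_of_forall_nonempty_inter (fun n ↦ (T ^ n).continuous)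
    fun U V hU hUne hV hVne ↦ ?_
  obtain ⟨y, hyU, hy⟩ := hT.inter_open_nonempty U hU hUne
  obtain ⟨z, hzV, hz⟩ := hR.inter_open_nonempty V hV hVne
  have hstart : Tendsto (fun n ↦ y + (R ^ n) z) atTop (𝓝 y) := by
    simpa only [add_zero] using tendsto_const_nhds.add hz
  have hTRz (n : ℕ) : (T ^ n) ((R ^ n) z) = z := by
    rw [← mul_apply_eq_comp, pow_mul_pow_eq_one n hTR, one_apply_eq_self]
  have hend : Tendsto (fun n ↦ (T ^ n) (y + (R ^ n) z)) atTop (𝓝 z) := by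
    simpa only [map_add, hTRz, zero_add] using hy.add_const z
  obtain ⟨n, hnU, hnV⟩ :=
    ((hstart.eventually_mem (hU.mem_nhds hyU)).and (hend.eventually_mem (hV.mem_nhds hzV))).exists
  exact ⟨n, _, hnU, hnV⟩

theorem tendsto_pow_apply_zero_of_norm_lt_one {𝕜 E : Type*} [NontriviallyNormedField 𝕜]
    [SeminormedAddCommGroup E] [NormedSpace 𝕜 E] {R : E →L[𝕜] E} (hR : ‖R‖ < 1) (z : E) :
    Tendsto (fun n ↦ (R ^ n) z) atTop (𝓝 0) := by
  have heval : Tendsto (fun S : E →L[𝕜] E ↦ S z) (𝓝 0) (𝓝 0) :=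
    (ContinuousLinearMap.apply 𝕜 E z).continuous.tendsto' 0 0 (map_zero _)
  exact heval.comp (tendsto_pow_atTop_nhds_zero_of_norm_lt_one hR)

theorem tendsto_pow_apply_zero_of_mem_span {𝕜 E : Type*} [Semiring 𝕜] [AddCommMonoid E]
    [Module 𝕜 E] [TopologicalSpace E] [ContinuousAdd E] [ContinuousConstSMul 𝕜 E] {T : E →L[𝕜] E}
    {s : Set E} (hs : ∀ y ∈ s, Tendsto (fun n ↦ (T ^ n) y) atTop (𝓝 0)) {y : E}
    (hy : y ∈ Submodule.span 𝕜 s) : Tendsto (fun n ↦ (T ^ n) y) atTop (𝓝 0) := by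
  induction hy using Submodule.span_induction with
  | mem y hy => exact hs y hy
  | zero => simpa only [map_zero] using tendsto_const_nhds
  | add y z _ _ hy hz => simpa only [map_add, add_zero] using hy.add hz
  | smul c y _ hy => simpa only [map_smul, smul_zero] using hy.const_smul c

section Shift

variable {𝕜 E : Type*} [RCLike 𝕜] [NormedAddCommGroup E] [InnerProductSpace 𝕜 E]

theorem countable_of_orthonormal {ι : Type*} [TopologicalSpace.SeparableSpace E] {v : ι → E}
    (hv : Orthonormal 𝕜 v) : Countable ι := by
  have hdist {i j : ι} (hij : i ≠ j) : 1 ≤ dist (v i) (v j) := by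
    calc (1 : ℝ) = ‖inner 𝕜 (v i) (v i - v j)‖ := by
          rw [inner_sub_right, hv.2 hij, inner_self_eq_norm_sq_to_K, hv.1 i]
          simp
      _ ≤ ‖v i‖ * ‖v i - v j‖ := norm_inner_le_norm _ _
      _ = dist (v i) (v j) := by rw [hv.1 i, one_mul, dist_eq_norm]
  have hdisj : Pairwise (Function.onFun Disjoint fun i ↦ Metric.ball (v i) (1 / 2)) :=
    fun i j hij ↦ Metric.ball_disjoint_ball (by linarith [hdist hij])
  exact hdisj.countable_of_isOpen_disjoint (fun _ ↦ Metric.isOpen_ball)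
    fun i ↦ Metric.nonempty_ball.2 one_half_pos

theorem nonempty_hilbertBasis_nat [CompleteSpace E] [TopologicalSpace.SeparableSpace E]
    (hE : ¬ FiniteDimensional 𝕜 E) : Nonempty (HilbertBasis ℕ 𝕜 E) := by
  obtain ⟨w, b, -⟩ := exists_hilbertBasis 𝕜 E
  have : Countable w := countable_of_orthonormal b.orthonormal
  have : Infinite w := by
    refine not_finite_iff_infinite.1 fun _ ↦ hE ?_
    have : Fintype w := Fintype.ofFinite w
    exact Module.Finite.of_basis b.toOrthonormalBasis.toBasis
  obtain ⟨e⟩ := nonempty_equiv_of_countable (α := ℕ) (β := w)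
  refine ⟨HilbertBasis.mk (b.orthonormal.comp e e.injective) ?_⟩
  rw [e.surjective.range_comp, b.dense_span]

theorem separableSpace_of_hilbertBasis {ι : Type*} [Countable ι] (b : HilbertBasis ι 𝕜 E) :
    TopologicalSpace.SeparableSpace E := by
  rw [← TopologicalSpace.isSeparable_univ_iff, ← Submodule.top_coe (R := 𝕜), ← b.dense_span]
  exact (Set.countable_range b).isSeparable.span.closure

variable [CompleteSpace E]

/-- The forward shift `b i ↦ b (i + 1)` along a Hilbert basis indexed by `ℕ`, an isometric
right inverse of the backward shift. -/
noncomputable def forwardShift (b : HilbertBasis ℕ 𝕜 E) : E →ₗᵢ[𝕜] E :=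
  (b.orthonormal.comp Nat.succ Nat.succ_injective).orthogonalFamily.linearIsometry.comp
    b.repr.toLinearIsometry

/-- The backward shift `b (i + 1) ↦ b i`, `b 0 ↦ 0` along a Hilbert basis indexed by `ℕ`, encoded as
the adjoint of the forward shift. -/
noncomputable def backwardShift (b : HilbertBasis ℕ 𝕜 E) : E →L[𝕜] E :=
  ContinuousLinearMap.adjoint (forwardShift b).toContinuousLinearMap

variable (b : HilbertBasis ℕ 𝕜 E)

theorem forwardShift_apply_basis (i : ℕ) : forwardShift b (b i) = b (i + 1) := by
  have hV := (b.orthonormal.comp Nat.succ Nat.succ_injective).orthogonalFamily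
  have h := hV.linearIsometry_apply_single (i := i) (1 : 𝕜)
  rw [← b.repr_self] at h
  exact h.trans (one_smul 𝕜 _)

theorem backwardShift_mul_forwardShift :
    backwardShift b * (forwardShift b).toContinuousLinearMap = 1 :=
  (forwardShift b).toContinuousLinearMap.norm_map_iff_adjoint_comp_self.1 (forwardShift b).norm_map

theorem backwardShift_apply_basis_succ (i : ℕ) : backwardShift b (b (i + 1)) = b i := by
  rw [← forwardShift_apply_basis]
  exact DFunLike.congr_fun (backwardShift_mul_forwardShift b) (b i)

theorem backwardShift_apply_basis_zero : backwardShift b (b 0) = 0 := by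
  have hcoord (j : ℕ) : b.repr (backwardShift b (b 0)) j = 0 := by
    rw [b.repr_apply_apply, backwardShift, ContinuousLinearMap.adjoint_inner_right,
      LinearIsometry.coe_toContinuousLinearMap, forwardShift_apply_basis]
    exact b.orthonormal.2 j.succ_ne_zero
  exact b.repr.map_eq_zero_iff.1 (lp.ext (funext hcoord))

theorem backwardShift_pow_apply_basis {i n : ℕ} (h : i < n) : (backwardShift b ^ n) (b i) = 0 := by
  induction n generalizing i with
  | zero => exact absurd h i.not_lt_zero
  | succ n ih =>
    rw [pow_succ, mul_apply_eq_comp]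
    cases i with
    | zero => rw [backwardShift_apply_basis_zero, map_zero]
    | succ i => rw [backwardShift_apply_basis_succ, ih (Nat.lt_of_succ_lt_succ h)]

theorem hypercyclic_smul_backwardShift {a : 𝕜} (ha : 1 < ‖a‖) :
    Hypercyclic (a • backwardShift b) := by
  have : TopologicalSpace.SeparableSpace E := separableSpace_of_hilbertBasis b
  have : SecondCountableTopology E := UniformSpace.secondCountable_of_separable E
  have ha₀ : a ≠ 0 := norm_pos_iff.1 (one_pos.trans ha)
  have hnilpotent : ∀ y ∈ Set.range b,
      Tendsto (fun n ↦ ((a • backwardShift b) ^ n) y) atTop (𝓝 0) := by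
    rintro _ ⟨i, rfl⟩
    refine tendsto_atTop_of_eventually_const (i₀ := i + 1) fun n hn ↦ ?_
    rw [smul_pow, smul_apply, backwardShift_pow_apply_basis b hn, smul_zero]
  have hcontraction : ‖a⁻¹ • (forwardShift b).toContinuousLinearMap‖ < 1 := by
    rw [norm_smul, norm_inv]
    calc ‖a‖⁻¹ * ‖(forwardShift b).toContinuousLinearMap‖ ≤ ‖a‖⁻¹ * 1 := by
          gcongr
          exact (forwardShift b).norm_toContinuousLinearMap_le
      _ < 1 := by rw [mul_one]; exact inv_lt_one_of_one_lt₀ ha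
  refine hypercyclic_of_dense_tendsto_zero
    (R := a⁻¹ • (forwardShift b).toContinuousLinearMap) ?_ ?_ ?_
  · rw [smul_mul_smul_comm, backwardShift_mul_forwardShift, mul_inv_cancel₀ ha₀, one_smul]
  · exact (Submodule.dense_iff_topologicalClosure_eq_top.2 b.dense_span).mono
      fun y ↦ tendsto_pow_apply_zero_of_mem_span hnilpotent
  · exact dense_univ.mono fun z _ ↦ tendsto_pow_apply_zero_of_norm_lt_one hcontraction z

end Shift

theorem stmt18_general.{u} {a : ℂ} (ha : 1 < ‖a‖) :
    Dense (diskOrbit (a • ContinuousLinearMap.id ℂ ℂ) 1) ∧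
    ¬ DiskCyclic (a⁻¹ • ContinuousLinearMap.id ℂ ℂ) ∧
    ∀ (H : Type u) [NormedAddCommGroup H] [InnerProductSpace ℂ H] [CompleteSpace H]
      [TopologicalSpace.SeparableSpace H] [Nontrivial H],
      (∃ T : H →L[ℂ] H, DiskCyclic T) ↔
        (Module.rank ℂ H = 1 ∨ ¬ FiniteDimensional ℂ H) := by
  refine ⟨dense_diskOrbit_smul_id ha fun y ↦ ⟨y, mul_one y⟩, not_diskCyclic_of_norm_le_one ?_, ?_⟩
  · rw [norm_smul, norm_inv, ContinuousLinearMap.norm_id, mul_one]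
    exact inv_le_one_of_one_le₀ ha.le
  intro H _ _ _ _ _
  rw [Module.rank_eq_one_iff_finrank_eq_one]
  constructor
  · rintro ⟨T, hT⟩
    by_contra! ⟨hone, _⟩
    have hpos : 0 < Module.finrank ℂ H := Module.finrank_pos
    exact not_supercyclic_of_one_lt_finrank (by omega) T hT.supercyclic
  · rintro (hone | hinf)
    · obtain ⟨x, hx⟩ := exists_ne (0 : H)
      exact ⟨_, x, dense_diskOrbit_smul_id ha (exists_smul_eq_of_finrank_eq_one hone hx)⟩
    · obtain ⟨b⟩ := nonempty_hilbertBasis_nat hinf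
      exact ⟨_, (hypercyclic_smul_backwardShift b ha).diskCyclic⟩

theorem stmt18 :
    Dense (diskOrbit ((2 : ℂ) • ContinuousLinearMap.id ℂ ℂ) 1) ∧
    ¬ DiskCyclic ((2 : ℂ)⁻¹ • ContinuousLinearMap.id ℂ ℂ) ∧
    ∀ (H : Type) [NormedAddCommGroup H] [InnerProductSpace ℂ H] [CompleteSpace H]
      [TopologicalSpace.SeparableSpace H] [Nontrivial H],
      (∃ T : H →L[ℂ] H, DiskCyclic T) ↔
        (Module.rank ℂ H = 1 ∨ ¬ FiniteDimensional ℂ H) :=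
  stmt18_general (by norm_num)
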